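/- There exists n₀ ∈ ℕ such that for all integers n > n₀, both IR(2K₂, K_{1,n}) ≤ n + 2·n·(log n)^{−1/4} and IR(P₄, K_{1,n}) ≤ n + 2·n·(log n)^{−1/4} hold. -/

import Mathlib

open SimpleGraph

def ArrowsInd {V α β : Type*} (F : SimpleGraph V) (H : SimpleGraph α) (G : SimpleGraph β) : Prop :=
  ∀ c : Sym2 V → Bool,
    (∃ f : H ↪g F, ∀ u v, H.Adj u v → c s(f u, f v) = true) ∨
    (∃ g : G ↪g F, ∀ u v, G.Adj u v → c s(g u, g v) = false)

noncomputable def IR {α β : Type*} (H : SimpleGraph α) (G : SimpleGraph β) : ℕ :=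
  sInf {N : ℕ | ∃ F : SimpleGraph (Fin N), ArrowsInd F H G}

def StarGraph (n : ℕ) : SimpleGraph (Fin 1 ⊕ Fin n) := completeBipartiteGraph (Fin 1) (Fin n)

/-- The graph 2K₂ consisting of two disjoint edges. -/
def TwoK2 : SimpleGraph (Fin 4) :=
  SimpleGraph.fromEdgeSet {s((0 : Fin 4), (1 : Fin 4)), s((2 : Fin 4), (3 : Fin 4))}

/-!
The host is the bipartite graph on `ι ⊔ (κ^ι × σ)` joining a coordinate `i` to `(t, x)` when
`t i ≠ 0`, with `|κ| = q` and `|ι| = q³`. Put `m = q^(q³ - 1) |σ|`. Every coordinate has degree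
`(q - 1) m`, so a colouring without a blue `K_{1,n}`, `n ≤ (q - 2) m`, gives every coordinate more
than `m` red neighbours. By Bernoulli's inequality, more than `q²` coordinates have at most `m`
common neighbours, so the red neighbourhood of a coordinate is contained in the neighbourhoods of at
most `q²` coordinates. As `2q² < q³`, two coordinates each have a red neighbour not adjacent to
the other, which gives a red induced `2K₂`. As there are more than `q³ m = q² (q m)` red edges, some
`(t, x)` is a red neighbour of more than `q²` coordinates; if `i` is one of them, another one is not
adjacent to some red neighbour of `i`, which gives a red induced `P₄`.

There are `q³ + q m` vertices, which is about `n + 2n / (q - 2)` if `|σ|` is least possible and `q`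
grows slowly. Taking `q - 2 = ⌈2 (log n)^(1/4)⌉` makes `2n / (q - 2)` half of the allowed error, and
`q³ + q^(q³)`, the cost of rounding `|σ|` up, is below the other half.
-/

open Finset Filter

section MonoInducedCopy

variable {V W α β : Type*}

/-- `F` contains an induced copy of `H` all of whose edges have colour `col` under the edge
colouring `c`. `ArrowsInd` is the disjunction of two such statements, with `true` for red and
`false` for blue. -/
def HasMonoInducedCopy (H : SimpleGraph W) (F : SimpleGraph V) (c : Sym2 V → Bool) (col : Bool) :
    Prop :=
  ∃ f : H ↪g F, ∀ u v, H.Adj u v → c s(f u, f v) = col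

theorem ArrowsInd.IR_le_card [Fintype V] {F : SimpleGraph V} {H : SimpleGraph α}
    {G : SimpleGraph β} (h : ArrowsInd F H G) : IR H G ≤ Fintype.card V := by
  let e := Fintype.equivFin V
  let i : F ≃g F.map e.toEmbedding := SimpleGraph.Iso.map e F
  refine Nat.sInf_le ⟨F.map e.toEmbedding, fun c ↦ ?_⟩
  exact (h fun z ↦ c (z.map e)).imp (fun ⟨f, hf⟩ ↦ ⟨i.toEmbedding.comp f, hf⟩)
    (fun ⟨g, hg⟩ ↦ ⟨i.toEmbedding.comp g, hg⟩)

theorem hasMonoInducedCopy_of_forall_lt [LinearOrder W] {H : SimpleGraph W} {F : SimpleGraph V}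
    {c : Sym2 V → Bool} {col : Bool} (f : W → V)
    (hf : ∀ u v, u < v →
      f u ≠ f v ∧ (F.Adj (f u) (f v) ↔ H.Adj u v) ∧ (H.Adj u v → c s(f u, f v) = col)) :
    HasMonoInducedCopy H F c col := by
  have hne : ∀ u v, u ≠ v →
      f u ≠ f v ∧ (F.Adj (f u) (f v) ↔ H.Adj u v) ∧ (H.Adj u v → c s(f u, f v) = col) := by
    intro u v huv
    rcases huv.lt_or_gt with h | h
    · exact hf u v h
    · rw [ne_comm, F.adj_comm, H.adj_comm, Sym2.eq_swap]
      exact hf v u h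
  refine ⟨⟨⟨f, fun u v h ↦ by_contra fun huv ↦ (hne u v huv).1 h⟩, fun {u v} ↦ ?_⟩,
    fun u v h ↦ (hne u v h.ne).2.2 h⟩
  rcases eq_or_ne u v with rfl | huv
  · simp
  · exact (hne u v huv).2.1

end MonoInducedCopy

section BipartiteGraph

variable {α β : Type*}

/-- The bipartite graph with parts `α` and `β` whose edges are the pairs related by `r`. -/
def bipartiteGraphOfRel (r : α → β → Prop) : SimpleGraph (α ⊕ β) where
  Adj
    | .inl a, .inr b => r a b
    | .inr b, .inl a => r a b
    | _, _ => False
  symm := ⟨by rintro (_ | _) (_ | _) h <;> exact h⟩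
  loopless := ⟨by rintro (_ | _) h <;> exact h⟩

variable {r : α → β → Prop} {c : Sym2 (α ⊕ β) → Bool} {col : Bool}

@[simp]
theorem bipartiteGraphOfRel_adj_inl_inr {a : α} {b : β} :
    (bipartiteGraphOfRel r).Adj (.inl a) (.inr b) ↔ r a b := Iff.rfl

@[simp]
theorem bipartiteGraphOfRel_adj_inr_inl {a : α} {b : β} :
    (bipartiteGraphOfRel r).Adj (.inr b) (.inl a) ↔ r a b := Iff.rfl

@[simp]
theorem not_bipartiteGraphOfRel_adj_inl_inl {a a' : α} :
    ¬ (bipartiteGraphOfRel r).Adj (.inl a) (.inl a') := id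

@[simp]
theorem not_bipartiteGraphOfRel_adj_inr_inr {b b' : β} :
    ¬ (bipartiteGraphOfRel r).Adj (.inr b) (.inr b') := id

section ColorNbhd

variable [Fintype β] [DecidableRel r]

variable (r c col) in
/-- The neighbours of `a` in `bipartiteGraphOfRel r` along edges of colour `col`. -/
def colorNbhd (a : α) : Finset β := {b | r a b ∧ c s(.inl a, .inr b) = col}

theorem mem_colorNbhd {a : α} {b : β} :
    b ∈ colorNbhd r c col a ↔ r a b ∧ c s(.inl a, .inr b) = col := by
  simp [colorNbhd]

theorem card_colorNbhd_true_add_card_colorNbhd_false (a : α) :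
    #(colorNbhd r c true a) + #(colorNbhd r c false a) = #{b | r a b} := by
  simpa only [colorNbhd, filter_filter, Bool.not_eq_true] using
    card_filter_add_card_filter_not (s := ({b | r a b} : Finset β)) (c s(.inl a, .inr ·) = true)

theorem hasMonoInducedCopy_starGraph {n : ℕ} {a : α} (hn : n ≤ #(colorNbhd r c col a)) :
    HasMonoInducedCopy (StarGraph n) (bipartiteGraphOfRel r) c col := by
  obtain ⟨e⟩ : Nonempty (Fin n ↪ colorNbhd r c col a) :=
    Function.Embedding.nonempty_of_card_le (by simpa using hn)
  have he (i : Fin n) : r a (e i) ∧ c s(.inl a, .inr (e i).1) = col := mem_colorNbhd.1 (e i).2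
  let leaves : Fin n ↪ β := e.trans (Function.Embedding.subtype _)
  let center : Fin 1 ↪ α := ⟨fun _ ↦ a, Function.injective_of_subsingleton _⟩
  refine ⟨⟨center.sumMap leaves, ?_⟩, ?_⟩
  · rintro (_ | i) (_ | j) <;> simp [StarGraph, center, leaves, he]
  · rintro (_ | i) (_ | j) h
    · simp [StarGraph] at h
    · exact (he j).2
    · rw [Sym2.eq_swap]
      exact (he i).2
    · simp [StarGraph] at h

theorem hasMonoInducedCopy_twoK2 {a a' : α} {b b' : β} (hb : b ∈ colorNbhd r c col a)
    (hb' : b' ∈ colorNbhd r c col a') (hab' : ¬ r a b') (ha'b : ¬ r a' b) :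
    HasMonoInducedCopy TwoK2 (bipartiteGraphOfRel r) c col := by
  rw [mem_colorNbhd] at hb hb'
  have ha : a ≠ a' := by rintro rfl; exact ha'b hb.1
  have hbb' : b ≠ b' := by rintro rfl; exact hab' hb.1
  refine hasMonoInducedCopy_of_forall_lt ![.inl a, .inr b, .inl a', .inr b'] ?_
  simp [Fin.forall_fin_succ, TwoK2, *]

theorem hasMonoInducedCopy_pathGraph_four {a a' : α} {b b' : β} (hb : b ∈ colorNbhd r c col a)
    (hb' : b ∈ colorNbhd r c col a') (hb'' : b' ∈ colorNbhd r c col a') (hab' : ¬ r a b') :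
    HasMonoInducedCopy (pathGraph 4) (bipartiteGraphOfRel r) c col := by
  rw [mem_colorNbhd] at hb hb' hb''
  have ha : a ≠ a' := by rintro rfl; exact hab' hb''.1
  have hbb' : b ≠ b' := by rintro rfl; exact hab' hb.1
  have hcol : c s(.inr b, .inl a') = col := by rw [Sym2.eq_swap]; exact hb'.2
  refine hasMonoInducedCopy_of_forall_lt ![.inl a, .inr b, .inl a', .inr b'] ?_
  simp [Fin.forall_fin_succ, pathGraph_adj, *]

end ColorNbhd

end BipartiteGraph

section Arrows

variable {α β : Type*} [Fintype β] {r : α → β → Prop} [DecidableRel r] {D m n : ℕ}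

theorem lt_card_colorNbhd_true {c : Sym2 (α ⊕ β) → Bool} {a : α} (hdeg : n + m ≤ #{b | r a b})
    (hc : ¬ HasMonoInducedCopy (StarGraph n) (bipartiteGraphOfRel r) c false) :
    m < #(colorNbhd r c true a) := by
  have hblue : #(colorNbhd r c false a) < n := not_le.1 (mt hasMonoInducedCopy_starGraph hc)
  have := card_colorNbhd_true_add_card_colorNbhd_false (r := r) (c := c) a
  lia

variable (r) in
/-- The set of elements of `β` to which all elements of `S` are related. -/
def commonNbhd (S : Finset α) : Finset β := {b | ∀ a ∈ S, r a b}

theorem mem_commonNbhd {S : Finset α} {b : β} : b ∈ commonNbhd r S ↔ ∀ a ∈ S, r a b := by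
  simp [commonNbhd]

variable (r D m) in
/-- Any more than `D` elements of `α` have at most `m` common neighbours under `r`: this is the only
pseudorandomness that the host graph needs. -/
def HasSmallCommonNbhds : Prop := ∀ S : Finset α, D < #S → #(commonNbhd r S) ≤ m

variable [Fintype α]

theorem HasSmallCommonNbhds.card_le (h : HasSmallCommonNbhds r D m) {T : Finset β}
    (hT : m < #T) : #{a | ∀ b ∈ T, r a b} ≤ D := by
  by_contra! hD
  refine ((card_le_card fun b hb ↦ ?_).trans (h _ hD)).not_gt hT
  exact mem_commonNbhd.2 fun a ha ↦ mem_filter_univ a |>.1 ha b hb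

theorem exists_not_rel_not_rel_of_card_le {s : α → α → Prop} [DecidableRel s]
    (hs : ∀ a, #{a' | s a a'} ≤ D) (hD : 2 * D < Fintype.card α) :
    ∃ a a', ¬ s a a' ∧ ¬ s a' a := by
  by_contra! h
  have hcover (a : α) :
      Fintype.card α ≤ #(univ.bipartiteAbove s a) + #(univ.bipartiteBelow s a) := by
    classical
    have hunion : (univ : Finset α) ⊆ univ.bipartiteAbove s a ∪ univ.bipartiteBelow s a := by
      intro a' _
      simpa [or_iff_not_imp_left] using h a a'
    exact (card_le_card hunion).trans (card_union_le _ _)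
  have hle : Fintype.card α * Fintype.card α ≤ Fintype.card α * (2 * D) :=
    calc Fintype.card α * Fintype.card α
        ≤ ∑ a, (#(univ.bipartiteAbove s a) + #(univ.bipartiteBelow s a)) :=
          card_nsmul_le_sum univ _ _ fun a _ ↦ hcover a
      _ = 2 * ∑ a, #(univ.bipartiteAbove s a) := by
          rw [sum_add_distrib, ← sum_card_bipartiteAbove_eq_sum_card_bipartiteBelow, two_mul]
      _ ≤ 2 * (Fintype.card α * D) := by
          gcongr
          exact sum_le_card_nsmul univ _ _ fun a _ ↦ hs a
      _ = Fintype.card α * (2 * D) := by ring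
  exact hD.not_ge (Nat.le_of_mul_le_mul_left hle (by lia))

theorem arrowsInd_twoK2_starGraph (hdeg : ∀ a, n + m ≤ #{b | r a b})
    (hr : HasSmallCommonNbhds r D m) (hD : 2 * D < Fintype.card α) :
    ArrowsInd (bipartiteGraphOfRel r) TwoK2 (StarGraph n) := by
  refine fun c ↦ or_iff_not_imp_right.2 fun hblue ↦ ?_
  obtain ⟨a, a', h, h'⟩ := exists_not_rel_not_rel_of_card_le
    (s := fun a a' ↦ ∀ b ∈ colorNbhd r c true a, r a' b)
    (fun a ↦ hr.card_le (lt_card_colorNbhd_true (hdeg a) hblue)) hD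
  push Not at h h'
  obtain ⟨b, hb, ha'b⟩ := h
  obtain ⟨b', hb', hab'⟩ := h'
  exact hasMonoInducedCopy_twoK2 hb hb' hab' ha'b

theorem arrowsInd_pathGraph_four_starGraph (hdeg : ∀ a, n + m ≤ #{b | r a b})
    (hr : HasSmallCommonNbhds r D m)
    (hD : Fintype.card β * D < Fintype.card α * (m + 1)) :
    ArrowsInd (bipartiteGraphOfRel r) (pathGraph 4) (StarGraph n) := by
  classical
  refine fun c ↦ or_iff_not_imp_right.2 fun hblue ↦ ?_
  have hred (a : α) : m < #(colorNbhd r c true a) := lt_card_colorNbhd_true (hdeg a) hblue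
  obtain ⟨b, hb⟩ : ∃ b, D < #{a | b ∈ colorNbhd r c true a} := by
    by_contra! hle
    refine hD.not_ge (card_mul_le_card_mul (fun a b ↦ b ∈ colorNbhd r c true a)
      (s := univ) (t := univ) (fun a _ ↦ ?_) fun b _ ↦ hle b)
    simpa [bipartiteAbove] using hred a
  obtain ⟨a', ha'⟩ : ({a | b ∈ colorNbhd r c true a} : Finset α).Nonempty :=
    card_pos.1 (Nat.zero_lt_of_lt hb)
  obtain ⟨a, ha, hadom⟩ := exists_mem_notMem_of_card_lt_card
    ((hr.card_le (hred a')).trans_lt hb)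
  simp only [mem_filter_univ, not_forall] at ha ha' hadom
  obtain ⟨b', hb', hab'⟩ := hadom
  exact hasMonoInducedCopy_pathGraph_four ha ha' hb' hab'

end Arrows

theorem pow_mul_succ_le_succ_pow {a D : ℕ} (hD : a ^ 2 ≤ D) : a ^ D * (a + 1) ≤ (a + 1) ^ D := by
  rcases D.eq_zero_or_pos with rfl | hpos
  · simp_all
  calc a ^ D * (a + 1) = a ^ D + a ^ 2 * a ^ (D - 1) := by
        obtain ⟨d, rfl⟩ := Nat.exists_eq_succ_of_ne_zero hpos.ne'
        simp only [Nat.succ_eq_add_one, Nat.add_sub_cancel]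
        ring
    _ ≤ a ^ D + D * a ^ (D - 1) * 1 := by rw [mul_one]; gcongr
    _ ≤ (a + 1) ^ D := pow_add_mul_le_add_pow_of_sq_nonneg (Nat.zero_le _) (Nat.zero_le _)
        (Nat.zero_le _) (Nat.zero_le _) D

theorem pow_mul_succ_pow_sub_le {a D k : ℕ} (hD : a ^ 2 ≤ D) (hDk : D ≤ k) :
    a ^ D * (a + 1) ^ (k - D) ≤ (a + 1) ^ (k - 1) := by
  rcases eq_or_ne k 0 with rfl | hk
  · simp_all
  refine Nat.le_of_mul_le_mul_right (c := a + 1) ?_ a.succ_pos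
  calc a ^ D * (a + 1) ^ (k - D) * (a + 1)
      = a ^ D * (a + 1) * (a + 1) ^ (k - D) := by ring
    _ ≤ (a + 1) ^ D * (a + 1) ^ (k - D) := by
        gcongr
        exact pow_mul_succ_le_succ_pow hD
    _ = (a + 1) ^ (k - 1) * (a + 1) := by
        rw [← pow_add, Nat.add_sub_cancel' hDk, pow_sub_one_mul hk]

section NonzeroCoord

/-- The relation defining the host graph: the coordinate `i` is joined to the `|σ|` copies of each
vector `t : ι → κ` that does not vanish at `i`. -/
def NonzeroCoord (ι κ σ : Type*) [Zero κ] (i : ι) (b : (ι → κ) × σ) : Prop := b.1 i ≠ 0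

variable {ι κ σ : Type*} [Zero κ]

instance [DecidableEq κ] : DecidableRel (NonzeroCoord ι κ σ) :=
  fun i b ↦ inferInstanceAs (Decidable (b.1 i ≠ 0))

variable [Fintype ι] [Fintype κ] [Fintype σ] [DecidableEq ι] [DecidableEq κ]

theorem card_forall_mem_ne_zero (S : Finset ι) :
    #{t : ι → κ | ∀ i ∈ S, t i ≠ 0} =
      (Fintype.card κ - 1) ^ #S * Fintype.card κ ^ (Fintype.card ι - #S) := by
  have hpi (t : ι → κ) : (∀ i ∈ S, t i ≠ 0) ↔
      t ∈ Fintype.piFinset fun i ↦ if i ∈ S then ({0}ᶜ : Finset κ) else univ := by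
    rw [Fintype.mem_piFinset]
    exact forall_congr' fun i ↦ by by_cases hi : i ∈ S <;> simp [hi]
  simp only [hpi, filter_univ_mem, Fintype.card_piFinset, apply_ite card, prod_ite, prod_const,
    card_compl, card_singleton, card_univ, filter_not, ← compl_eq_univ_sdiff]

theorem card_commonNbhd_nonzeroCoord (S : Finset ι) :
    #(commonNbhd (NonzeroCoord ι κ σ) S) =
      (Fintype.card κ - 1) ^ #S * Fintype.card κ ^ (Fintype.card ι - #S) * Fintype.card σ := by
  have hprod : commonNbhd (NonzeroCoord ι κ σ) S =
      ({t | ∀ i ∈ S, t i ≠ 0} : Finset (ι → κ)) ×ˢ univ := by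
    ext b
    simp only [mem_commonNbhd, NonzeroCoord, mem_product, mem_filter_univ, mem_univ, and_true]
  rw [hprod, card_product, card_forall_mem_ne_zero, card_univ]

theorem card_nonzeroCoord (i : ι) :
    #{b | NonzeroCoord ι κ σ i b} =
      (Fintype.card κ - 1) * (Fintype.card κ ^ (Fintype.card ι - 1) * Fintype.card σ) := by
  simpa [mul_assoc, commonNbhd] using card_commonNbhd_nonzeroCoord (κ := κ) (σ := σ) {i}

theorem hasSmallCommonNbhds_nonzeroCoord :
    HasSmallCommonNbhds (NonzeroCoord ι κ σ) (Fintype.card κ ^ 2)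
      (Fintype.card κ ^ (Fintype.card ι - 1) * Fintype.card σ) := by
  intro S hS
  obtain ⟨p, hp⟩ := Nat.exists_eq_add_one_of_ne_zero (Fintype.card_ne_zero (α := κ))
  have hSι : #S ≤ Fintype.card ι := card_le_univ S
  rw [card_commonNbhd_nonzeroCoord]
  rw [hp] at hS ⊢
  gcongr
  exact pow_mul_succ_pow_sub_le ((Nat.pow_le_pow_left p.le_succ 2).trans hS.le) hSι

end NonzeroCoord

section Bounds

theorem max_IR_le_of_le_mul {p s n : ℕ} (hp : 0 < p)
    (hn : n ≤ p * ((p + 2) ^ ((p + 2) ^ 3 - 1) * s)) :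
    max (IR TwoK2 (StarGraph n)) (IR (pathGraph 4) (StarGraph n)) ≤
      (p + 2) ^ 3 + (p + 2) ^ (p + 2) ^ 3 * s := by
  set q := p + 2 with hq
  set m := q ^ (q ^ 3 - 1) * s with hm
  have hdeg (i : Fin (q ^ 3)) : n + m ≤ #{b | NonzeroCoord (Fin (q ^ 3)) (Fin q) (Fin s) i b} := by
    rw [card_nonzeroCoord, Fintype.card_fin, Fintype.card_fin, Fintype.card_fin, ← hm]
    calc n + m ≤ p * m + m := by gcongr
      _ = (q - 1) * m := by rw [hq, show p + 2 - 1 = p + 1 from rfl, add_one_mul]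
  have hcommon : HasSmallCommonNbhds (NonzeroCoord (Fin (q ^ 3)) (Fin q) (Fin s)) (q ^ 2) m := by
    simpa using hasSmallCommonNbhds_nonzeroCoord (ι := Fin (q ^ 3)) (κ := Fin q) (σ := Fin s)
  have hcard : Fintype.card (Fin (q ^ 3) ⊕ (Fin (q ^ 3) → Fin q) × Fin s) =
      q ^ 3 + q ^ q ^ 3 * s := by simp
  rw [← hcard]
  refine max_le (arrowsInd_twoK2_starGraph hdeg hcommon ?_).IR_le_card
    (arrowsInd_pathGraph_four_starGraph hdeg hcommon ?_).IR_le_card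
  · rw [Fintype.card_fin, pow_succ' q 2]
    gcongr
    lia
  · have hq3 : q ^ 3 ≠ 0 := by positivity
    simp only [Fintype.card_prod, Fintype.card_fun, Fintype.card_fin]
    calc q ^ q ^ 3 * s * q ^ 2 = q ^ 3 * m := by
          rw [hm, ← pow_sub_one_mul hq3]
          ring
      _ < q ^ 3 * (m + 1) := by gcongr; exact m.lt_succ_self

theorem max_IR_le_add_div_add_pow {p : ℕ} (hp : 0 < p) (n : ℕ) :
    (max (IR TwoK2 (StarGraph n)) (IR (pathGraph 4) (StarGraph n)) : ℕ) ≤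
      (n : ℝ) + 2 * n / p + 2 * (p + 2 : ℝ) ^ (p + 2) ^ 3 := by
  set k := (p + 2) ^ 3
  have hk0 : k ≠ 0 := by positivity
  set d := p * (p + 2) ^ (k - 1) with hd
  have hd0 : 0 < d := by positivity
  have hn : n ≤ p * ((p + 2) ^ (k - 1) * (n / d + 1)) := by
    rw [← mul_assoc]
    exact (Nat.lt_mul_div_succ n hd0).le
  have hkpow : (k : ℝ) ≤ (p + 2 : ℝ) ^ k := by
    exact_mod_cast (Nat.lt_pow_self (by lia : 1 < p + 2)).le
  calc ((max (IR TwoK2 (StarGraph n)) (IR (pathGraph 4) (StarGraph n)) : ℕ) : ℝ)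
      ≤ k + (p + 2 : ℝ) ^ k * ((n / d : ℕ) + 1) := by exact_mod_cast max_IR_le_of_le_mul hp hn
    _ ≤ (p + 2 : ℝ) ^ k + (p + 2 : ℝ) ^ k * (n / d + 1) := by gcongr; exact Nat.cast_div_le
    _ = n + 2 * n / p + 2 * (p + 2 : ℝ) ^ k := by
        rw [hd, ← pow_sub_one_mul hk0 (p + 2 : ℝ)]
        push_cast
        field_simp
        ring

theorem eventually_pow_cube_add_one_le {c : ℝ} (hc : 0 < c) :
    ∀ᶠ q : ℕ in atTop, (q : ℝ) ^ (q ^ 3 + 1) ≤ 2 ^ (c * q ^ 4) := by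
  have hlog := (Real.isLittleO_log_id_atTop.comp_tendsto tendsto_natCast_atTop_atTop).def
    (show 0 < c * Real.log 2 / 2 by positivity)
  filter_upwards [hlog, eventually_ge_atTop 1] with q hlogq hq
  have hq1 : (1 : ℝ) ≤ q := by exact_mod_cast hq
  have hlogq' : Real.log q ≤ c * Real.log 2 / 2 * q := by
    simpa [abs_of_nonneg (Real.log_natCast_nonneg q)] using hlogq
  rw [← Real.log_le_log_iff (by positivity) (by positivity), Real.log_pow,
    Real.log_rpow two_pos]
  push_cast
  calc ((q : ℝ) ^ 3 + 1) * Real.log q ≤ (q ^ 3 + q ^ 3) * (c * Real.log 2 / 2 * q) := by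
        gcongr
        exact one_le_pow₀ hq1
    _ = c * q ^ 4 * Real.log 2 := by ring

theorem eventually_two_mul_mul_ceil_pow_le :
    ∀ᶠ x : ℝ in atTop,
      2 * x * (⌈2 * x⌉₊ + 2 : ℝ) ^ (⌈2 * x⌉₊ + 2) ^ 3 ≤ 2 ^ (x ^ 4) := by
  have hq : Tendsto (fun x : ℝ ↦ ⌈2 * x⌉₊ + 2) atTop atTop :=
    tendsto_atTop_mono (fun _ ↦ Nat.le_add_right _ 2)
      (tendsto_nat_ceil_atTop.comp (tendsto_id.const_mul_atTop (two_pos (α := ℝ))))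
  filter_upwards [hq.eventually (eventually_pow_cube_add_one_le (c := 1 / 81) (by norm_num)),
    eventually_ge_atTop 3] with x hpow hx
  have hlow : 2 * x ≤ ⌈2 * x⌉₊ := Nat.le_ceil _
  have hup : (⌈2 * x⌉₊ : ℝ) < 2 * x + 1 := Nat.ceil_lt_add_one (by linarith)
  push_cast at hpow
  calc 2 * x * (⌈2 * x⌉₊ + 2 : ℝ) ^ (⌈2 * x⌉₊ + 2) ^ 3
      ≤ (⌈2 * x⌉₊ + 2) * (⌈2 * x⌉₊ + 2 : ℝ) ^ (⌈2 * x⌉₊ + 2) ^ 3 := by gcongr; linarith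
    _ = (⌈2 * x⌉₊ + 2 : ℝ) ^ ((⌈2 * x⌉₊ + 2) ^ 3 + 1) := (pow_succ' _ _).symm
    _ ≤ 2 ^ (1 / 81 * (⌈2 * x⌉₊ + 2 : ℝ) ^ 4) := hpow
    _ ≤ 2 ^ (1 / 81 * (3 * x) ^ 4) := by
        gcongr
        · exact one_le_two
        · linarith
    _ = 2 ^ (x ^ 4) := by ring_nf

theorem eventually_max_IR_le :
    ∀ᶠ n : ℕ in atTop,
      (max (IR TwoK2 (StarGraph n)) (IR (pathGraph 4) (StarGraph n)) : ℕ) ≤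
        (n : ℝ) + 2 * n * Real.logb 2 n ^ (-(1 / 4 : ℝ)) := by
  have hL : Tendsto (fun n : ℕ ↦ Real.logb 2 n ^ (1 / 4 : ℝ)) atTop atTop :=
    (tendsto_rpow_atTop (by norm_num)).comp
      ((Real.tendsto_logb_atTop one_lt_two).comp tendsto_natCast_atTop_atTop)
  filter_upwards [hL.eventually eventually_two_mul_mul_ceil_pow_le, hL.eventually_gt_atTop 0,
    eventually_ge_atTop 1] with n hpow hL0 hn
  have hlog : 0 ≤ Real.logb 2 n := Real.logb_nonneg one_lt_two (by exact_mod_cast hn)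
  rw [Real.rpow_neg hlog]
  have hL4 : (Real.logb 2 n ^ (1 / 4 : ℝ)) ^ 4 = Real.logb 2 n := by
    rw [← Real.rpow_mul_natCast hlog]
    norm_num
  rw [hL4, Real.rpow_logb two_pos (by norm_num) (by exact_mod_cast hn)] at hpow
  set L := Real.logb 2 n ^ (1 / 4 : ℝ)
  set p := ⌈2 * L⌉₊
  have hp : 2 * L ≤ p := Nat.le_ceil _
  have hpow' : 2 * (p + 2 : ℝ) ^ (p + 2) ^ 3 ≤ n / L := by
    rw [le_div_iff₀ hL0]
    linarith
  calc ((max (IR TwoK2 (StarGraph n)) (IR (pathGraph 4) (StarGraph n)) : ℕ) : ℝ)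
      ≤ n + 2 * n / p + 2 * (p + 2 : ℝ) ^ (p + 2) ^ 3 :=
        max_IR_le_add_div_add_pow (Nat.ceil_pos.2 (by positivity)) n
    _ ≤ n + 2 * n / (2 * L) + n / L := by gcongr
    _ = n + 2 * n * L⁻¹ := by
        field_simp
        ring

end Bounds

/-- for all sufficiently large n, both IR(2K₂, K_{1,n}) and
IR(P₄, K_{1,n}) are at most n + 2n·(log₂ n)^{−1/4}. -/
theorem IR_2K2_P4_upper :
    ∃ n₀ : ℕ, ∀ n : ℕ, n₀ < n →
      (IR TwoK2 (StarGraph n) : ℝ) ≤ n + 2 * n * (Real.logb 2 n) ^ (-(1 / 4 : ℝ)) ∧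
      (IR (SimpleGraph.pathGraph 4) (StarGraph n) : ℝ)
        ≤ n + 2 * n * (Real.logb 2 n) ^ (-(1 / 4 : ℝ)) := by
  obtain ⟨n₀, h⟩ := eventually_atTop.1 eventually_max_IR_le
  refine ⟨n₀, fun n hn ↦ ⟨?_, ?_⟩⟩
  · exact (Nat.cast_le.2 (le_max_left _ _)).trans (h n hn.le)
  · exact (Nat.cast_le.2 (le_max_right _ _)).trans (h n hn.le)
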